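/- Let G be a finite simple connected graph on [n]. Then for all i ≥ 0 and s ≥ 1 one has β_i(I_c(G)^s) ≤ β_i(I_c(G)^{s+1}), where β_i denotes the i-th total Betti number. In particular, the projective dimension function s ↦ pd(I_c(G)^s) is non-decreasing. -/

import Mathlib

/-!
The proof compares `I_c(G)^s` with `f · I_c(G)^s ⊆ I_c(G)^(s+1)` for a fixed generator `f`. If
`I_c(G)^s` has a linear resolution, its Koszul homology in homological degree `i` sits in total
degree `i + (n - 2) s`. After multiplication by `f` this is the linear strand of `I_c(G)^(s+1)`,
where the Koszul complex has no chains one step up, so homology equals cycles and multiplication by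
`f` is injective on it (`rank_pow_le`). Summing over multidegrees gives both claims.

Linearity (`degree_of_nontrivial`) is proved through linear quotients. The generators of `I_c(G)^s`
have exponents `s·𝟙 - d`, with `d` running over the degree vectors of multigraphs with `s` edges of
`G`. With the vertices listed by decreasing distance from a root, these generators are weakly
polymatroidal: if `d` and `d'` first differ at `t` and `d t < d' t`, then one unit of `d'` can be
moved from `t` to a later vertex. This is an alternating walk argument between multigraphs realising
`d` and `d'` (`exists_exchange`, `exists_order`).

In a fixed multidegree the Koszul strand is the augmented chain complex of a simplicial complex.
Adding generators in lexicographic order of `d`, the new faces of each step are either matched by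
adding and removing one vertex, which leaves homology zero where it was zero
(`Acyc.of_matching`), or consist of at most one face whose cardinality is that of the linear strand
(`Acyc.insert`).
-/

open MvPolynomial

namespace Paper

noncomputable section

variable (K : Type) [Field K] (n : ℕ)

/-- The polynomial ring `S = K[x_1, …, x_n]`. -/
abbrev S := MvPolynomial (Fin n) K

variable {n}

/-- The squarefree exponent vector of a subset `F ⊆ [n]`. -/
def expF (F : Finset (Fin n)) : Fin n →₀ ℕ := ∑ j ∈ F, Finsupp.single j 1

variable {K}

/-- Basis of the multidegree-`a` component of the `i`-th term of the Koszul
complex of `x_1, …, x_n` tensored with the ideal `I`:  subsets `F` of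
cardinality `i` such that `x^(a - ε_F) ∈ I`. -/
abbrev KB (I : Ideal (S K n)) (a : Fin n →₀ ℕ) (i : ℕ) : Type :=
  {F : Finset (Fin n) // F.card = i ∧ expF F ≤ a ∧
    (monomial (a - expF F) (1 : K) : S K n) ∈ I}

/-- The Koszul differential (in multidegree `a`) from homological degree
`i+1` to `i`. -/
def kd (I : Ideal (S K n)) (a : Fin n →₀ ℕ) (i : ℕ) :
    (KB I a (i + 1) →₀ K) →ₗ[K] (KB I a i →₀ K) :=
  Finsupp.lsum K fun F =>
    LinearMap.toSpanSingleton K _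
      (∑ j ∈ F.1.attach,
        ((-1 : K) ^ ((F.1.filter (fun x => x < j.1)).card)) •
          Finsupp.single
            (⟨F.1.erase j.1, by
              obtain ⟨hcard, hle, hmem⟩ := F.2
              have hj : j.1 ∈ F.1 := j.2
              have herase : expF (F.1.erase j.1) + Finsupp.single j.1 1 = expF F.1 := by
                simpa [expF] using Finset.sum_erase_add F.1 (fun k => Finsupp.single k (1:ℕ)) hj
              refine ⟨by simp [Finset.card_erase_of_mem hj, hcard], ?_, ?_⟩
              · refine le_trans ?_ hle
                rw [← herase]; exact le_add_of_nonneg_right bot_le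
              · have h1 : Finsupp.single j.1 1 ≤ expF F.1 := by
                  rw [← herase]; exact le_add_of_nonneg_left bot_le
                have key : a - expF (F.1.erase j.1) =
                    (a - expF F.1) + Finsupp.single j.1 1 := by
                  have : expF (F.1.erase j.1) = expF F.1 - Finsupp.single j.1 1 := by
                    rw [← herase]; simp
                  rw [this, tsub_tsub_assoc hle h1]
                rw [key]
                have : (monomial ((a - expF F.1) + Finsupp.single j.1 1) (1:K) : S K n)
                    = (monomial (a - expF F.1) (1:K)) * (monomial (Finsupp.single j.1 1) (1:K)) := by
                  rw [monomial_mul, mul_one]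
                rw [this]
                exact Ideal.mul_mem_right _ _ hmem⟩ : KB I a i) (1 : K))

/-- The outgoing Koszul differential from homological degree `i`
(the zero map when `i = 0`). -/
def kdOut (I : Ideal (S K n)) (a : Fin n →₀ ℕ) :
    (i : ℕ) → (KB I a i →₀ K) →ₗ[K] (KB I a (i - 1) →₀ K)
  | 0 => 0
  | (i + 1) => kd I a i

/-- The multidegree-`a` component of `Tor_i^S(K, I)`, computed as the `i`-th
homology of the multidegree-`a` strand of the Koszul complex tensored
with `I`. -/
abbrev Hmod (I : Ideal (S K n)) (a : Fin n →₀ ℕ) (i : ℕ) :=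
  ↥(Submodule.map (Submodule.mkQ (LinearMap.range (kd I a i)))
      (LinearMap.ker (kdOut I a i)))

/-- The `i`-th homological shift ideal `HS_i(I)`, generated by the monomials
`x^a` with `Tor_i^S(K, I)_a ≠ 0`. -/
def HSIdeal (i : ℕ) (I : Ideal (S K n)) : Ideal (S K n) :=
  Ideal.span {p | ∃ a : Fin n →₀ ℕ, Nontrivial (Hmod I a i) ∧ p = monomial a 1}

/-- `I` is a monomial ideal. -/
def IsMonomialIdeal (I : Ideal (S K n)) : Prop :=
  ∃ A : Set (Fin n →₀ ℕ), I = Ideal.span ((fun a => (monomial a 1 : S K n)) '' A)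

/-- `I` has a `d`-linear resolution: `Tor_i^S(K,I)_j = 0` whenever `j ≠ i + d`. -/
def LinearRes (d : ℕ) (I : Ideal (S K n)) : Prop :=
  ∀ (i : ℕ) (a : Fin n →₀ ℕ), (a.sum fun _ e => e) ≠ i + d → Subsingleton (Hmod I a i)

/-- The projective dimension of (a finitely generated multigraded module such
as) `I` over `S`: the largest `i` with `Tor_i^S(K, I) ≠ 0`. -/
def pdim (I : Ideal (S K n)) : ℕ :=
  sSup {i | ∃ a, Nontrivial (Hmod I a i)}

variable (K n)

/-- The graded maximal ideal `𝔪 = (x_1, …, x_n)`. -/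
def maxIdl : Ideal (S K n) := Ideal.span (Set.range X)

/-- The `i`-th squarefree power `𝔪^{[i]} = (x_F : F ⊆ [n], |F| = i)`. -/
def sqPow (i : ℕ) : Ideal (S K n) :=
  Ideal.span {p | ∃ F : Finset (Fin n), F.card = i ∧ p = monomial (expF F) 1}

/-- The exponent vector of `α = x_1⋯x_n`. -/
def aexp : Fin n →₀ ℕ := expF (Finset.univ : Finset (Fin n))

/-- The edge ideal `I(G)` of a graph `G` on `[n]`. -/
def edgeIdeal (G : SimpleGraph (Fin n)) : Ideal (S K n) :=
  Ideal.span {p | ∃ i j, G.Adj i j ∧ p = X i * X j}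

/-- The complementary edge ideal `I_c(G)` of a graph `G` on `[n]`. -/
def compIdeal (G : SimpleGraph (Fin n)) : Ideal (S K n) :=
  Ideal.span {p | ∃ i j, G.Adj i j ∧
    p = monomial (aexp n - Finsupp.single i 1 - Finsupp.single j 1) 1}


variable {K} {n}

end

/-! ### Chains of the full simplex -/

section KoszulChains

variable {K : Type} [Field K] {n : ℕ}

/-- The Koszul sign of `j` relative to `F`. -/
def sg (K : Type) [Field K] {n : ℕ} (j : Fin n) (F : Finset (Fin n)) : K :=
  (-1) ^ (F.filter (fun x => x < j)).card

lemma sg_mul_self (j : Fin n) (F : Finset (Fin n)) : sg K j F * sg K j F = 1 := by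
  unfold sg
  rw [← mul_pow]; simp

lemma sg_erase_self (j : Fin n) (F : Finset (Fin n)) : sg K j (F.erase j) = sg K j F := by
  unfold sg
  congr 2
  ext x
  simp only [Finset.mem_filter, Finset.mem_erase]
  exact ⟨fun h => ⟨h.1.2, h.2⟩, fun h => ⟨⟨h.2.ne, h.1⟩, h.2⟩⟩

lemma sg_insert (j v : Fin n) (F : Finset (Fin n)) (hv : v ∉ F) :
    sg K j (insert v F) = if v < j then - sg K j F else sg K j F := by
  unfold sg
  rw [Finset.filter_insert]
  split_ifs with h
  · rw [Finset.card_insert_of_notMem (by simp [hv]), pow_succ]; ring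
  · rfl

/-- The boundary of the full simplex on `Fin n` (augmented, indexed by faces). -/
noncomputable def bd (K : Type) [Field K] {n : ℕ} :
    (Finset (Fin n) →₀ K) →ₗ[K] (Finset (Fin n) →₀ K) :=
  Finsupp.lsum K fun F => LinearMap.toSpanSingleton K _
    (∑ j ∈ F, sg K j F • Finsupp.single (F.erase j) (1 : K))

/-- The cone operator with apex `v`: a contracting homotopy of the full simplex. -/
noncomputable def cone (K : Type) [Field K] {n : ℕ} (v : Fin n) :
    (Finset (Fin n) →₀ K) →ₗ[K] (Finset (Fin n) →₀ K) :=
  Finsupp.lsum K fun F => LinearMap.toSpanSingleton K _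
    (if v ∈ F then 0 else sg K v F • Finsupp.single (insert v F) (1 : K))

lemma bd_single (F : Finset (Fin n)) :
    bd K (Finsupp.single F 1) = ∑ j ∈ F, sg K j F • Finsupp.single (F.erase j) (1 : K) := by
  simp [bd]

lemma cone_single (v : Fin n) (F : Finset (Fin n)) :
    cone K v (Finsupp.single F 1) =
      if v ∈ F then 0 else sg K v F • Finsupp.single (insert v F) (1 : K) := by
  simp [cone]

lemma bd_cone_single (v : Fin n) (F : Finset (Fin n)) :
    bd K (cone K v (Finsupp.single F 1)) + cone K v (bd K (Finsupp.single F 1)) =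
      Finsupp.single F 1 := by
  by_cases hv : v ∈ F
  · rw [cone_single, if_pos hv, map_zero, zero_add, bd_single, map_sum,
      Finset.sum_eq_single_of_mem v hv]
    · rw [map_smul, cone_single, if_neg (by simp), smul_smul, sg_erase_self, sg_mul_self,
        one_smul, Finset.insert_erase hv]
    · intro j _ hjv
      rw [map_smul, cone_single, if_pos (by simp [hv, hjv.symm]), smul_zero]
  · rw [cone_single, if_neg hv, map_smul, bd_single, bd_single, Finset.sum_insert hv, smul_add,
      Finset.erase_insert hv, smul_smul, sg_insert v v F hv, if_neg (lt_irrefl v), sg_mul_self,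
      one_smul, add_assoc, map_sum, Finset.smul_sum, ← Finset.sum_add_distrib,
      Finset.sum_eq_zero, add_zero]
    intro j hj
    have hjv : j ≠ v := fun h => hv (h ▸ hj)
    have hvj : v ∉ F.erase j := fun h => hv (Finset.mem_of_mem_erase h)
    rw [map_smul, cone_single, if_neg hvj, smul_smul, smul_smul,
      Finset.erase_insert_of_ne hjv.symm, ← add_smul]
    have h1 : sg K v F = if j < v then - sg K v (F.erase j) else sg K v (F.erase j) := by
      rw [← sg_insert v j _ (by simp), Finset.insert_erase hj]
    rw [h1, sg_insert j v F hv]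
    rcases lt_or_gt_of_ne hjv with h | h
    · rw [if_pos h, if_neg h.not_gt, show ∀ a b : K, -a * b + b * a = 0 by intros; ring, zero_smul]
    · rw [if_neg h.not_gt, if_pos h, show ∀ a b : K, a * -b + b * a = 0 by intros; ring, zero_smul]

lemma bd_cone (v : Fin n) (z : Finset (Fin n) →₀ K) :
    bd K (cone K v z) + cone K v (bd K z) = z := by
  have h : (bd K ∘ₗ cone K v + cone K v ∘ₗ bd K : _ →ₗ[K] _) = LinearMap.id := by
    refine Finsupp.lhom_ext' fun F => LinearMap.ext_ring ?_
    simpa using bd_cone_single v F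
  exact LinearMap.congr_fun h z

/-- `∂² = 0`. Since `∂²` commutes with every cone operator, this propagates from `∅` to all
faces by adding one vertex at a time. -/
lemma bd_bd (z : Finset (Fin n) →₀ K) : bd K (bd K z) = 0 := by
  have h : (bd K ∘ₗ bd K : (Finset (Fin n) →₀ K) →ₗ[K] _) = 0 := by
    refine Finsupp.lhom_ext' fun F => LinearMap.ext_ring ?_
    simp only [LinearMap.coe_comp, Function.comp_apply, Finsupp.lsingle_apply,
      LinearMap.zero_apply]
    induction F using Finset.induction_on with
    | empty => simp [bd_single]
    | insert v F hv ih =>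
      have e : (Finsupp.single (insert v F) 1 : Finset (Fin n) →₀ K) =
          sg K v F • cone K v (Finsupp.single F 1) := by
        rw [cone_single, if_neg hv, smul_smul, sg_mul_self, one_smul]
      have h1 := bd_cone v (Finsupp.single F (1 : K))
      have h2 := bd_cone v (bd K (Finsupp.single F (1 : K)))
      rw [ih, map_zero, add_zero] at h2
      rw [e, map_smul, map_smul, eq_sub_of_add_eq h1, map_sub, h2, sub_self, smul_zero]
  exact LinearMap.congr_fun h z

lemma cone_apply (v : Fin n) (z : Finset (Fin n) →₀ K) (F : Finset (Fin n)) :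
    cone K v z F = if v ∈ F then sg K v F * z (F.erase v) else 0 := by
  induction z using Finsupp.induction_linear with
  | zero => simp
  | add f g hf hg => rw [map_add, Finsupp.add_apply, hf, hg]; split_ifs <;> simp [mul_add]
  | single H b =>
    have : Finsupp.single H b = b • Finsupp.single H (1 : K) := by simp
    rw [this, map_smul, cone_single]
    by_cases hF : v ∈ F
    · by_cases hH : v ∈ H
      · have : H ≠ F.erase v := fun h => by simp [h] at hH
        simp [hF, hH, this]
      · by_cases hHF : H = F.erase v
        · subst hHF
          simp [hF, Finset.insert_erase hF, sg_erase_self, mul_comm]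
        · have : insert v H ≠ F := fun h => hHF (by rw [← h, Finset.erase_insert hH])
          simp [hF, hH, hHF, this]
    · by_cases hH : v ∈ H
      · simp [hF, hH]
      · have : insert v H ≠ F := fun h => hF (by rw [← h]; simp)
        simp [hF, hH, this]

lemma bd_mem_supported {s t : Set (Finset (Fin n))} (h : ∀ F ∈ s, ∀ j ∈ F, F.erase j ∈ t)
    {z : Finset (Fin n) →₀ K} (hz : z ∈ Finsupp.supported K K s) :
    bd K z ∈ Finsupp.supported K K t := by
  rw [← Finsupp.sum_single z, Finsupp.sum, map_sum]
  refine Submodule.sum_mem _ fun F hF => ?_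
  have : Finsupp.single F (z F) = z F • Finsupp.single F (1 : K) := by simp
  rw [this, map_smul, bd_single]
  refine Submodule.smul_mem _ _ (Submodule.sum_mem _ fun j hj => Submodule.smul_mem _ _ ?_)
  exact Finsupp.single_mem_supported K _ (h F (hz hF) j hj)

/-- Every cycle of the family of faces `Δ` concentrated in cardinality `i` is a boundary of a
chain of `Δ`; for a simplicial complex `Δ` this is the vanishing of its reduced homology in
dimension `i - 1`. -/
def Acyc (K : Type) [Field K] {n : ℕ} (Δ : Set (Finset (Fin n))) (i : ℕ) : Prop :=
  ∀ z ∈ Finsupp.supported K K (Δ ∩ {F | F.card = i}), bd K z = 0 →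
    ∃ w ∈ Finsupp.supported K K (Δ ∩ {F | F.card = i + 1}), bd K w = z

lemma Acyc.congr_card {Δ Δ' : Set (Finset (Fin n))} {i : ℕ} (h : Acyc K Δ i) (hsub : Δ ⊆ Δ')
    (hnew : ∀ F ∈ Δ', F ∉ Δ → F.card ≠ i) : Acyc K Δ' i := by
  intro z hz hbz
  have hle : Δ' ∩ {F | F.card = i} ⊆ Δ ∩ {F | F.card = i} :=
    fun F hF => ⟨by_contra fun hn => hnew F hF.1 hn hF.2, hF.2⟩
  obtain ⟨w, hw, e⟩ := h z (Finsupp.supported_mono hle hz) hbz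
  exact ⟨w, Finsupp.supported_mono (Set.inter_subset_inter_left _ hsub) hw, e⟩

/-- If the faces of `Δ'` outside `Δ` are matched by adding and removing a vertex `v`, then the
relative complex of `(Δ', Δ)` is contracted by the cone operator, and vanishing of homology passes
from `Δ` to `Δ'`. -/
lemma Acyc.of_matching {Δ Δ' : Set (Finset (Fin n))} {i : ℕ} (h : Acyc K Δ i) (hsub : Δ ⊆ Δ')
    (hd : ∀ F ∈ Δ, ∀ j ∈ F, F.erase j ∈ Δ) (hd' : ∀ F ∈ Δ', ∀ j ∈ F, F.erase j ∈ Δ')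
    (v : Fin n) (hins : ∀ F ∈ Δ', F ∉ Δ → insert v F ∈ Δ')
    (her : ∀ F ∈ Δ', F ∉ Δ → F.erase v ∉ Δ) : Acyc K Δ' i := by
  classical
  intro z hz hbz
  set y := z.filter (fun F => F ∉ Δ) with hy
  set x := z.filter (fun F => ¬ F ∉ Δ) with hx
  have hxy : y + x = z := Finsupp.filter_add_filter_not z _
  have hxs : x ∈ Finsupp.supported K K Δ := by
    rw [Finsupp.mem_supported']
    intro F hF
    rw [hx, Finsupp.filter_apply_neg]
    simpa using hF
  have hzs : ∀ F, z F ≠ 0 → F ∈ Δ' ∧ F.card = i := fun F hF => hz (by simpa using hF)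
  have hys : ∀ F, y F ≠ 0 → F ∈ Δ' ∧ F ∉ Δ ∧ F.card = i := by
    intro F hF
    have hn : F ∉ Δ := by
      by_contra hn
      exact hF (by rw [hy, Finsupp.filter_apply_neg]; simpa using hn)
    rw [hy, Finsupp.filter_apply_pos (fun F => F ∉ Δ) _ hn] at hF
    exact ⟨(hzs F hF).1, hn, (hzs F hF).2⟩
  have hw : cone K v y ∈ Finsupp.supported K K (Δ' ∩ {F | F.card = i + 1}) := by
    rw [Finsupp.mem_supported']
    intro F hF
    by_contra hne
    rw [cone_apply] at hne
    split_ifs at hne with hv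
    · obtain ⟨h1, h2, h3⟩ := hys _ (right_ne_zero_of_mul hne)
      refine hF ⟨?_, ?_⟩
      · have := hins _ h1 h2
        rwa [Finset.insert_erase hv] at this
      · rw [Finset.card_erase_of_mem hv] at h3
        have := Finset.card_pos.2 ⟨v, hv⟩
        show F.card = i + 1
        omega
    · exact hne rfl
  have hbw : bd K (cone K v y) ∈ Finsupp.supported K K (Δ' ∩ {F | F.card = i}) := by
    refine bd_mem_supported ?_ hw
    intro F hF j hj
    refine ⟨hd' F hF.1 j hj, ?_⟩
    have := hF.2
    simp only [Set.mem_ofPred_eq] at this ⊢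
    rw [Finset.card_erase_of_mem hj, this]; rfl
  have hdiff : z - bd K (cone K v y) ∈ Finsupp.supported K K (Δ' ∩ {F | F.card = i}) :=
    Submodule.sub_mem _ hz hbw
  have hdiff' : z - bd K (cone K v y) ∈ Finsupp.supported K K (Δ ∩ {F | F.card = i}) := by
    rw [Finsupp.mem_supported'] at hdiff ⊢
    intro F hF
    by_cases hF' : F ∈ Δ' ∩ {F | F.card = i}
    swap
    · exact hdiff F hF'
    have hn : F ∉ Δ := fun hn => hF ⟨hn, hF'.2⟩
    have e1 : bd K (cone K v y) F = z F - cone K v (bd K y) F := by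
      rw [eq_sub_of_add_eq (bd_cone v y), Finsupp.sub_apply]
      congr 1
      rw [hy, Finsupp.filter_apply_pos (fun F => F ∉ Δ) _ hn]
    have e2 : cone K v (bd K y) F = 0 := by
      rw [cone_apply]
      split_ifs
      · have e3 : bd K y = - bd K x := by
          rw [eq_neg_iff_add_eq_zero, ← map_add, hxy, hbz]
        have e4 : bd K x (F.erase v) = 0 :=
          (Finsupp.mem_supported' K _).1 (bd_mem_supported hd hxs) _ (her F hF'.1 hn)
        rw [e3, Finsupp.neg_apply, e4, neg_zero, mul_zero]
      · rfl
    rw [Finsupp.sub_apply, e1, e2, sub_zero, sub_self]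
  obtain ⟨w, hws, e⟩ := h _ hdiff' (by rw [map_sub, hbz, bd_bd, sub_self])
  refine ⟨w + cone K v y, Submodule.add_mem _
    (Finsupp.supported_mono (Set.inter_subset_inter_left _ hsub) hws) hw, ?_⟩
  rw [map_add, e, sub_add_cancel]

end KoszulChains

/-! ### Degree vectors of multigraphs -/

section Multigraphs

variable {n : ℕ}

/-- The degree of the vertex `v` in the multigraph with edge multiset `M`. -/
def dg (M : Multiset (Sym2 (Fin n))) (v : Fin n) : ℕ := M.countP (fun e => v ∈ e)

lemma dg_cons {y w : Fin n} (hyw : y ≠ w) (M : Multiset (Sym2 (Fin n))) (v : Fin n) :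
    dg (s(y, w) ::ₘ M) v = dg M v + (if v = y then 1 else 0) + (if v = w then 1 else 0) := by
  unfold dg
  rw [Multiset.countP_cons]
  by_cases h1 : v = y
  · subst h1; simp [hyw]
  · by_cases h2 : v = w
    · subst h2; simp [h1]
    · simp [h1, h2]

lemma dg_le_card (M : Multiset (Sym2 (Fin n))) (v : Fin n) : dg M v ≤ M.card :=
  Multiset.countP_le_card _ _

lemma sum_dg (G : SimpleGraph (Fin n)) (M : Multiset (Sym2 (Fin n)))
    (hM : ∀ e ∈ M, e ∈ G.edgeSet) : ∑ v, dg M v = 2 * M.card := by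
  induction M using Multiset.induction_on with
  | empty => simp [dg]
  | cons e M ih =>
    have ih' := ih fun f hf => hM f (Multiset.mem_cons_of_mem hf)
    have he := hM e (Multiset.mem_cons_self e M)
    induction e with
    | h y w =>
      have hyw : y ≠ w := (G.mem_edgeSet.1 he).ne
      simp only [dg_cons hyw, Finset.sum_add_distrib, ih', Multiset.card_cons,
        Finset.sum_ite_eq', Finset.mem_univ, if_true]
      ring

lemma exists_edge_of_dg_lt {G : SimpleGraph (Fin n)} {M N : Multiset (Sym2 (Fin n))}
    (hN : ∀ e ∈ N, e ∈ G.edgeSet) {y : Fin n} (h : dg M y < dg N y) :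
    ∃ w, G.Adj y w ∧ s(y, w) ∈ N - M := by
  have h1 : dg N y ≤ dg (N - M) y + dg M y := by
    unfold dg
    rw [← Multiset.countP_add]
    exact Multiset.countP_le_of_le _ (le_tsub_add)
  have h2 : 0 < dg (N - M) y := by omega
  obtain ⟨e, he, hy⟩ := Multiset.countP_pos.1 h2
  obtain ⟨w, rfl⟩ := hy
  exact ⟨w, G.mem_edgeSet.1 (hN _ (Multiset.mem_of_le tsub_le_self he)), he⟩

/-- Alternating walks. The multigraph `N` is carried towards `M` by exchanging edges of `N - M`
for edges of `M - N`; at each stage its degree vector is `d'` with one unit moved from `t` to the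
current endpoint `y`. The walk continues while `y` does not come after `t`, and each round shrinks
`M - N`, so eventually the unit lands on some `l` after `t`. -/
lemma exists_exchange {G : SimpleGraph (Fin n)} {r : Fin n → Fin n} (hr : Function.Injective r)
    {M : Multiset (Sym2 (Fin n))} (hM : ∀ e ∈ M, e ∈ G.edgeSet) {t : Fin n} {d' : Fin n → ℕ}
    (hlt : ∀ v, r v < r t → dg M v = d' v) (ht : dg M t < d' t)
    (hA : ∃ l, G.Adj t l ∧ r t < r l)
    (hB : ∀ w, r t < r w → (∃ l, G.Adj w l ∧ r t < r l) ∨ d' w ≤ dg M w) (k : ℕ) :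
    ∀ (N : Multiset (Sym2 (Fin n))) (y : Fin n), (M - N).card ≤ k → (∀ e ∈ N, e ∈ G.edgeSet) →
      r y ≤ r t →
      (∀ v, dg N v + (if v = t then 1 else 0) = d' v + (if v = y then 1 else 0)) →
      ∃ (N' : Multiset (Sym2 (Fin n))) (l : Fin n), N'.card = N.card ∧
        (∀ e ∈ N', e ∈ G.edgeSet) ∧ r t < r l ∧
        ∀ v, dg N' v + (if v = t then 1 else 0) = d' v + (if v = l then 1 else 0) := by
  induction k using Nat.strong_induction_on with
  | _ k ih =>
  intro N y hk hN hy hd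
  have hgt : dg M y < dg N y := by
    have := hd y
    by_cases hyt : y = t
    · subst hyt; simp at this; omega
    · have h1 := hlt y (lt_of_le_of_ne hy fun h => hyt (hr h))
      simp [hyt] at this; omega
  obtain ⟨w, hyw, hmem⟩ := exists_edge_of_dg_lt hN hgt
  have hmemN : s(y, w) ∈ N := Multiset.mem_of_le tsub_le_self hmem
  obtain ⟨N0, rfl⟩ := Multiset.exists_cons_of_mem hmemN
  have hN0 : ∀ e ∈ N0, e ∈ G.edgeSet := fun e he => hN e (Multiset.mem_cons_of_mem he)
  have hd0 : ∀ v, dg N0 v + (if v = w then 1 else 0) + (if v = t then 1 else 0) = d' v := by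
    intro v
    have := hd v
    rw [dg_cons hyw.ne] at this
    omega
  have addEdge : ∀ l, G.Adj w l →
      (∀ e ∈ s(w, l) ::ₘ N0, e ∈ G.edgeSet) ∧
      ∀ v, dg (s(w, l) ::ₘ N0) v + (if v = t then 1 else 0) = d' v + (if v = l then 1 else 0) := by
    intro l hl
    refine ⟨fun e he => ?_, fun v => ?_⟩
    · rcases Multiset.mem_cons.1 he with rfl | he
      · exact G.mem_edgeSet.2 hl
      · exact hN0 e he
    · have := hd0 v
      rw [dg_cons hl.ne]
      omega
  have finish : ∀ l, G.Adj w l → r t < r l → ∃ (N' : Multiset (Sym2 (Fin n))) (l : Fin n),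
      N'.card = (s(y, w) ::ₘ N0).card ∧ (∀ e ∈ N', e ∈ G.edgeSet) ∧ r t < r l ∧
        ∀ v, dg N' v + (if v = t then 1 else 0) = d' v + (if v = l then 1 else 0) :=
    fun l hl hrl => ⟨s(w, l) ::ₘ N0, l, by simp, (addEdge l hl).1, hrl, (addEdge l hl).2⟩
  by_cases hwt : w = t
  · subst hwt
    obtain ⟨l, hl, hrl⟩ := hA
    exact finish l hl hrl
  by_cases hl : ∃ l, G.Adj w l ∧ r t < r l
  · obtain ⟨l, hl, hrl⟩ := hl
    exact finish l hl hrl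
  -- the hole at `w` is filled by an edge of `M`
  have hw : d' w ≤ dg M w := by
    rcases lt_trichotomy (r w) (r t) with h | h | h
    · exact (hlt w h).ge
    · exact absurd (hr h) hwt
    · exact (hB w h).resolve_left hl
  have hlt0 : dg N0 w < dg M w := by
    have := hd0 w
    simp at this
    omega
  obtain ⟨y', hy', hmem'⟩ := exists_edge_of_dg_lt hM hlt0
  by_cases hyl : r t < r y'
  · exact finish y' hy' hyl
  have hcard : (M - s(w, y') ::ₘ N0).card < (M - s(y, w) ::ₘ N0).card := by
    have e1 : M - s(y, w) ::ₘ N0 = M - N0 := by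
      ext f
      have h1 : 0 < Multiset.count s(y, w) (s(y, w) ::ₘ N0 - M) := Multiset.count_pos.2 hmem
      simp only [Multiset.count_sub, Multiset.count_cons] at h1 ⊢
      by_cases hf : f = s(y, w)
      · subst hf; simp at h1 ⊢; omega
      · simp [hf]
    have e2 : M - s(w, y') ::ₘ N0 = (M - N0).erase s(w, y') := by
      ext f
      by_cases hf : f = s(w, y')
      · subst hf; simp only [Multiset.count_sub, Multiset.count_cons, Multiset.count_erase_self]
        simp; omega
      · rw [Multiset.count_erase_of_ne hf]
        simp [Multiset.count_sub, hf]
    rw [e1, e2]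
    exact Multiset.card_erase_lt_of_mem hmem'
  obtain ⟨N', l, h1, h2, h3, h4⟩ := ih _ (lt_of_lt_of_le hcard hk) _ y' le_rfl (addEdge y' hy').1
    (not_lt.1 hyl) (addEdge y' hy').2
  exact ⟨N', l, by simpa using h1, h2, h3, h4⟩

/-- The set of degree vectors of multigraphs with `s` edges, all taken from `G`. -/
def degSet (G : SimpleGraph (Fin n)) (s : ℕ) : Set (Fin n → ℕ) :=
  {d | ∃ M : Multiset (Sym2 (Fin n)), M.card = s ∧ (∀ e ∈ M, e ∈ G.edgeSet) ∧ ∀ v, d v = dg M v}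

lemma degSet_finite (G : SimpleGraph (Fin n)) (s : ℕ) : (degSet G s).Finite := by
  refine (Set.finite_Iic (fun _ : Fin n => s)).subset ?_
  rintro d ⟨M, rfl, -, hd⟩ v
  rw [hd v]
  exact dg_le_card M v

lemma sum_degSet {G : SimpleGraph (Fin n)} {s : ℕ} {d : Fin n → ℕ} (hd : d ∈ degSet G s) :
    ∑ v, d v = 2 * s := by
  obtain ⟨M, rfl, hM, h⟩ := hd
  simp only [h, sum_dg G M hM]

/-- Vertices can be listed by decreasing distance from a root. Every vertex other than the root then
has a neighbour after it, and the root, listed last, is adjacent to the vertex just before it. The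
resulting exchange property of `degSet` says that the generators of the powers of the complementary edge ideal
are weakly polymatroidal. -/
lemma exists_order (G : SimpleGraph (Fin n)) (hconn : G.Connected) :
    ∃ r : Equiv.Perm (Fin n), ∀ (s : ℕ), ∀ d ∈ degSet G s, ∀ d' ∈ degSet G s, ∀ t,
      (∀ v, r v < r t → d v = d' v) → d t < d' t →
      ∃ d'' ∈ degSet G s, ∃ l, r t < r l ∧
        ∀ v, d'' v + (if v = t then 1 else 0) = d' v + (if v = l then 1 else 0) := by
  obtain ⟨root⟩ := hconn.nonempty
  set f : Fin n → ℕᵒᵈ := fun v => OrderDual.toDual (G.dist root v) with hf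
  refine ⟨(Tuple.sort f).symm, ?_⟩
  set r := (Tuple.sort f).symm with hr
  have hmono : ∀ v w, r v ≤ r w → G.dist root w ≤ G.dist root v := by
    intro v w h
    have := Tuple.monotone_sort f h
    simpa [hr, hf] using this
  have hroot : ∀ w, G.dist root w = 0 → w = root := fun w h =>
    ((hconn.dist_eq_zero_iff).1 h).symm
  have hlater : ∀ w, w ≠ root → ∃ l, G.Adj w l ∧ r w < r l := by
    intro w hw
    obtain ⟨p, hp⟩ := hconn.exists_walk_length_eq_dist w root
    cases p with
    | nil => exact absurd rfl hw
    | @cons _ l _ h q =>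
      refine ⟨l, h, not_le.1 fun hle => ?_⟩
      have h1 := hmono _ _ hle
      have h2 := SimpleGraph.dist_le q
      rw [SimpleGraph.Walk.length_cons] at hp
      rw [SimpleGraph.dist_comm (u := root), SimpleGraph.dist_comm (u := root)] at h1
      omega
  intro s d hd d' hd' t hlt ht
  have hs : ∑ v, d v = ∑ v, d' v := by rw [sum_degSet hd, sum_degSet hd']
  have htr : t ≠ root := by
    obtain ⟨x, -, hx⟩ : ∃ x ∈ Finset.univ, d' x < d x := by
      by_contra! h
      exact absurd hs (Finset.sum_lt_sum h ⟨t, Finset.mem_univ _, ht⟩).ne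
    rintro rfl
    have hx1 : r t ≤ r x := not_lt.1 fun h => by rw [hlt x h] at hx; exact lt_irrefl _ hx
    have := hmono _ _ hx1
    rw [SimpleGraph.dist_self] at this
    have := hroot x (by omega)
    subst this
    omega
  have hB : ∀ w, r t < r w → (∃ l, G.Adj w l ∧ r t < r l) ∨ d' w ≤ d w := by
    intro w hw
    by_cases hwr : w = root
    swap
    · obtain ⟨l, h1, h2⟩ := hlater w hwr
      exact Or.inl ⟨l, h1, hw.trans h2⟩
    subst hwr
    by_contra! hcon
    obtain ⟨h1, h2⟩ := hcon
    obtain ⟨x, -, hx⟩ : ∃ x ∈ Finset.univ, d' x < d x := by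
      by_contra! h
      exact absurd hs (Finset.sum_lt_sum h ⟨t, Finset.mem_univ _, ht⟩).ne
    have hxt : r t < r x := by
      refine lt_of_le_of_ne (not_lt.1 fun h => ?_) fun h => ?_
      · rw [hlt x h] at hx; exact lt_irrefl _ hx
      · rw [r.injective h] at ht; omega
    have hxw : x ≠ w := by rintro rfl; omega
    obtain ⟨p, hp⟩ := hconn.exists_walk_length_eq_dist w x
    cases p with
    | nil => exact hxw rfl
    | @cons _ l _ h q =>
      -- `l` is at distance one from the root `w`, so it comes after `x` unless `x` is also at
      -- distance one, in which case `x` itself is a neighbour of `w` after `t`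
      by_cases hq : q.length = 0
      · have := SimpleGraph.Walk.eq_of_length_eq_zero hq
        subst this
        exact (h1 l h).not_gt hxt
      · have h3 := h1 l h
        have h4 := hmono _ _ (h3.trans hxt.le)
        have h5 : G.dist w l ≤ 1 := by simpa using SimpleGraph.dist_le h.toWalk
        rw [SimpleGraph.Walk.length_cons] at hp
        omega
  obtain ⟨M, hMc, hM, hMd⟩ := hd
  obtain ⟨M', hMc', hM', hMd'⟩ := hd'
  obtain ⟨N, l, hNc, hN, hl, hNd⟩ := exists_exchange (G := G) r.injective hM (t := t) (d' := d')
    (fun v hv => by rw [← hMd, hlt v hv]) (by rw [← hMd]; exact ht) (hlater t htr)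
    (fun w hw => by rw [← hMd]; exact hB w hw) _ M' t le_rfl hM' le_rfl (fun v => by rw [hMd'])
  exact ⟨dg N, ⟨N, hNc.trans hMc', hN, fun _ => rfl⟩, l, hl, hNd⟩

end Multigraphs

/-! ### Linear quotients and vanishing of homology -/

section LinearQuotients

variable {K : Type} [Field K] {n : ℕ}

/-- The sets `F` such that `a - ε_F` dominates `s·𝟙 - d` for some `d ∈ L`. -/
def faces (L : Set (Fin n → ℕ)) (s : ℕ) (a : Fin n →₀ ℕ) : Set (Finset (Fin n)) :=
  {F | ∃ d ∈ L, ∀ v, s + (if v ∈ F then 1 else 0) ≤ a v + d v}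

lemma faces_subset {L : Set (Fin n → ℕ)} {s : ℕ} {a : Fin n →₀ ℕ} {F H : Finset (Fin n)}
    (hF : F ∈ faces L s a) (h : H ⊆ F) : H ∈ faces L s a := by
  obtain ⟨d, hd, hv⟩ := hF
  refine ⟨d, hd, fun v => ?_⟩
  have := hv v
  by_cases h1 : v ∈ H
  · simpa [h1, h h1] using this
  · simp only [h1, if_false]; omega

/-- One step of a filtration by linear quotients. The variables of the colon ideal of the new
generator are the `t` for which `d` with one unit moved away from `t` lies in `L`. A vertex outside
of it that can still be added matches up the new faces; without such a vertex the only possible new face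
is `a - (s·𝟙 - d)` itself, whose cardinality is forced. -/
lemma Acyc.insert {L : Set (Fin n → ℕ)} {s i : ℕ} {a : Fin n →₀ ℕ} {d : Fin n → ℕ}
    (hex : ∀ d' ∈ L, ∃ t, d' t < d t ∧
      ∃ d'' ∈ L, ∃ l, ∀ v, d'' v + (if v = t then 1 else 0) = d v + (if v = l then 1 else 0))
    (hi : ∑ v, a v + ∑ v, d v ≠ i + n * s)
    (h : Acyc K (faces L s a) i) : Acyc K (faces (insert d L) s a) i := by
  have hsub : faces L s a ⊆ faces (Insert.insert d L) s a := by
    rintro F ⟨e, he, hv⟩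
    exact ⟨e, Set.mem_insert_of_mem _ he, hv⟩
  have hnewd : ∀ F ∈ faces (Insert.insert d L) s a, F ∉ faces L s a →
      ∀ v, s + (if v ∈ F then 1 else 0) ≤ a v + d v := by
    rintro F ⟨e, he, hv⟩ hn
    rcases he with rfl | he
    · exact hv
    · exact absurd ⟨e, he, hv⟩ hn
  by_cases hv : ∃ v, s + 1 ≤ a v + d v ∧
      ¬ ∃ d'' ∈ L, ∃ l, ∀ x, d'' x + (if x = v then 1 else 0) = d x + (if x = l then 1 else 0)
  · obtain ⟨v, hv1, hv2⟩ := hv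
    refine h.of_matching hsub (fun F hF j _ => faces_subset hF (Finset.erase_subset _ _))
      (fun F hF j _ => faces_subset hF (Finset.erase_subset _ _)) v ?_ ?_
    · intro F hF hn
      refine ⟨d, Set.mem_insert _ _, fun x => ?_⟩
      have := hnewd F hF hn x
      by_cases hx : x = v
      · subst hx; simpa using hv1
      · simpa [hx] using this
    · rintro F hF hn ⟨e, he, hev⟩
      obtain ⟨t, hte, d'', hd'', l, hl⟩ := hex e he
      have htv : t ≠ v := by
        rintro rfl
        exact hv2 ⟨d'', hd'', l, hl⟩
      refine hn ⟨d'', hd'', fun x => ?_⟩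
      have h1 := hnewd F hF hn x
      have h2 := hl x
      have h3 := hev x
      by_cases hx : x = t
      · subst hx
        simp only [Finset.mem_erase, ne_eq, htv, not_false_eq_true, true_and, if_true] at h2 h3
        omega
      · simp only [hx, if_false] at h2
        omega
  · push Not at hv
    refine h.congr_card hsub fun F hF hn hc => hi ?_
    have key : ∀ v, a v + d v = s + (if v ∈ F then 1 else 0) := by
      intro v
      have h1 := hnewd F hF hn v
      by_contra hne
      have hlt : s + (if v ∈ F then 1 else 0) + 1 ≤ a v + d v := by omega
      obtain ⟨d'', hd'', l, hl⟩ := hv v (by omega)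
      refine hn ⟨d'', hd'', fun x => ?_⟩
      have h2 := hl x
      by_cases hx : x = v
      · subst hx
        simp only [if_true] at h2
        omega
      · have h3 := hnewd F hF hn x
        simp only [hx, if_false] at h2
        omega
    rw [← Finset.sum_add_distrib, Finset.sum_congr rfl fun v _ => key v, Finset.sum_add_distrib]
    simp [hc, add_comm]

/-- The complexes attached to the powers of `I_c(G)` have homology only in the cardinality of the
linear strand: the degree vectors are added one by one in lexicographic order. -/
lemma acyc_faces_degSet (G : SimpleGraph (Fin n)) (hconn : G.Connected) (s i : ℕ)
    (a : Fin n →₀ ℕ) (hi : ∑ v, a v + 2 * s ≠ i + n * s) : Acyc K (faces (degSet G s) s a) i := by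
  classical
  obtain ⟨r, hr⟩ := exists_order G hconn
  set f : (Fin n → ℕ) → Lex (Fin n → ℕ) := fun d => toLex fun k => d (r.symm k) with hf
  have hfinj : Function.Injective f := by
    intro d e h
    funext v
    have := congrFun (toLex.injective h) (r v)
    simpa using this
  have hflt : ∀ d e, f d < f e ↔ ∃ t, (∀ v, r v < r t → d v = e v) ∧ d t < e t := by
    intro d e
    constructor
    · rintro ⟨k, h1, h2⟩
      refine ⟨r.symm k, fun v hv => ?_, h2⟩
      have := h1 (r v) (by simpa using hv)
      simpa [hf] using this
    · rintro ⟨t, h1, h2⟩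
      refine ⟨r t, fun k hk => ?_, ?_⟩
      · exact h1 (r.symm k) (by simpa using hk)
      · simpa [hf] using h2
  suffices H : ∀ L : Finset (Fin n → ℕ), (∀ x ∈ L, x ∈ degSet G s) →
      (∀ x ∈ L, ∀ d ∈ degSet G s, f d < f x → d ∈ L) → Acyc K (faces (L : Set (Fin n → ℕ)) s a) i by
    have := H (degSet_finite G s).toFinset (by simp) (by intro x _ d hd _; simpa using hd)
    simpa using this
  intro L
  induction L using Finset.induction_on_max_value f with
  | empty =>
    intro _ _ z hz _
    have : z = 0 := by simpa [faces] using hz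
    exact ⟨0, Submodule.zero_mem _, by simp [this]⟩
  | insert d L hdL hmax ih =>
    intro hL hinit
    have hd := hL d (Finset.mem_insert_self _ _)
    rw [Finset.coe_insert]
    refine Acyc.insert ?_ (by rwa [sum_degSet hd]) (ih ?_ ?_)
    · intro d' hd'
      have hd'S := hL d' (Finset.mem_insert_of_mem hd')
      have hlt : f d' < f d := lt_of_le_of_ne (hmax d' hd') fun h => hdL (hfinj h ▸ hd')
      obtain ⟨t, h1, h2⟩ := (hflt _ _).1 hlt
      obtain ⟨d'', hd'', l, hl, hv⟩ := hr s d' hd'S d hd t h1 h2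
      refine ⟨t, h2, d'', ?_, l, hv⟩
      have hlt2 : f d'' < f d := by
        refine (hflt _ _).2 ⟨t, fun v hvt => ?_, ?_⟩
        · have hvne : v ≠ t := by rintro rfl; exact lt_irrefl _ hvt
          have hvl : v ≠ l := by rintro rfl; exact lt_asymm hl hvt
          simpa [hvne, hvl] using hv v
        · have htl : t ≠ l := by rintro rfl; exact lt_irrefl _ hl
          have := hv t
          simp [htl] at this
          omega
      rcases Finset.mem_insert.1 (hinit d (Finset.mem_insert_self _ _) d'' hd'' hlt2) with rfl | h
      · exact absurd hlt2 (lt_irrefl _)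
      · exact h
    · exact fun x hx => hL x (Finset.mem_insert_of_mem hx)
    · intro x hx e he hlt
      rcases Finset.mem_insert.1 (hinit x (Finset.mem_insert_of_mem hx) e he hlt) with rfl | h
      · exact absurd (hmax x hx) (not_le.2 hlt)
      · exact h

end LinearQuotients

/-! ### Monomials in the powers of the complementary edge ideal -/

section Powers

variable {K : Type} [Field K] {n : ℕ}

lemma expF_apply (F : Finset (Fin n)) (v : Fin n) : expF F v = if v ∈ F then 1 else 0 := by
  simp [expF, Finsupp.finsetSum_apply, Finsupp.single_apply]

/-- The exponent vector of the generator of the complementary edge ideal given by an edge `ij`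
is complementary to the degree vector of `ij`. -/
lemma gen_apply {i j : Fin n} (hij : i ≠ j) (v : Fin n) :
    (aexp n - Finsupp.single i 1 - Finsupp.single j 1 : Fin n →₀ ℕ) v + dg {s(i, j)} v = 1 := by
  have := dg_cons hij 0 v
  simp only [Multiset.cons_zero] at this
  rw [this]
  simp only [Finsupp.tsub_apply, aexp, expF_apply, Finset.mem_univ, if_true,
    Finsupp.single_apply, dg, Multiset.countP_zero]
  by_cases h1 : v = i
  · subst h1; simp [hij, hij.symm]
  · by_cases h2 : v = j
    · subst h2; simp [hij, hij.symm]
    · simp [h1, h2, Ne.symm h1, Ne.symm h2]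

lemma dg_add (M N : Multiset (Sym2 (Fin n))) (v : Fin n) : dg (M + N) v = dg M v + dg N v :=
  Multiset.countP_add _ _ _

/-- The generators of `I_c(G)^s` are the monomials with exponent `s·𝟙 - d`, where `d` is the degree
vector of a multigraph with `s` edges of `G`. -/
lemma compIdeal_pow (G : SimpleGraph (Fin n)) (s : ℕ) :
    compIdeal K n G ^ s = Ideal.span ((fun u => (monomial u 1 : S K n)) ''
      {u | ∃ d ∈ degSet G s, ∀ v, u v + d v = s}) := by
  induction s with
  | zero =>
    have : {u : Fin n →₀ ℕ | ∃ d ∈ degSet G 0, ∀ v, u v + d v = 0} = {0} := by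
      ext u
      simp only [Set.mem_ofPred_eq, Set.mem_singleton_iff]
      constructor
      · rintro ⟨d, -, h⟩
        ext v
        have := h v
        simp only [Finsupp.coe_zero, Pi.zero_apply]
        omega
      · rintro rfl
        exact ⟨0, ⟨0, rfl, by simp, by simp [dg]⟩, by simp⟩
    rw [this, Set.image_singleton, pow_zero, Ideal.one_eq_top]
    refine ((Ideal.eq_top_iff_one _).2 ?_).symm
    exact Ideal.subset_span (Set.mem_singleton _)
  | succ s ih =>
    rw [pow_succ, ih, compIdeal, Ideal.span_mul_span']
    congr 1
    ext p
    rw [Set.mem_mul]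
    constructor
    · rintro ⟨_, ⟨u, ⟨d, ⟨M, hMc, hM, hd⟩, hu⟩, rfl⟩, _, ⟨i, j, hij, rfl⟩, rfl⟩
      refine ⟨u + (aexp n - Finsupp.single i 1 - Finsupp.single j 1), ⟨dg (M + {s(i, j)}),
        ⟨_, by simp [hMc], ?_, fun _ => rfl⟩, fun v => ?_⟩, by simp [monomial_mul]⟩
      · intro e he
        rcases Multiset.mem_add.1 he with he | he
        · exact hM e he
        · rw [Multiset.mem_singleton.1 he]; exact G.mem_edgeSet.2 hij
      · have h1 := gen_apply hij.ne v
        have h2 := hu v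
        rw [hd] at h2
        rw [dg_add, Finsupp.add_apply]
        omega
    · rintro ⟨u, ⟨d, ⟨M, hMc, hM, hd⟩, hu⟩, rfl⟩
      obtain ⟨e, he⟩ := Multiset.exists_mem_of_ne_zero (s := M) (by rintro rfl; simp at hMc)
      obtain ⟨M', rfl⟩ := Multiset.exists_cons_of_mem he
      induction e with
      | h i j =>
      have hij : G.Adj i j := G.mem_edgeSet.1 (hM _ (Multiset.mem_cons_self _ _))
      have hM'c : M'.card = s := by simpa using hMc
      refine ⟨_, ⟨Finsupp.equivFunOnFinite.symm fun v => s - dg M' v, ⟨dg M', ⟨M', hM'c,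
        fun e he => hM e (Multiset.mem_cons_of_mem he), fun _ => rfl⟩, fun v => ?_⟩, rfl⟩,
        _, ⟨i, j, hij, rfl⟩, ?_⟩
      · have := dg_le_card M' v
        simp only [Finsupp.equivFunOnFinite_symm_apply_apply]
        omega
      · rw [monomial_mul, mul_one]
        refine congrArg (fun b : Fin n →₀ ℕ => (monomial b (1 : K) : S K n))
          (Finsupp.ext fun v => ?_)
        have h1 := gen_apply hij.ne v
        have h2 := hu v
        have h3 := dg_le_card M' v
        rw [hd, ← Multiset.singleton_add, dg_add] at h2
        simp only [Finsupp.add_apply, Finsupp.equivFunOnFinite_symm_apply_apply]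
        omega

lemma monomial_mem_pow (G : SimpleGraph (Fin n)) (s : ℕ) (b : Fin n →₀ ℕ) :
    (monomial b 1 : S K n) ∈ compIdeal K n G ^ s ↔ ∃ d ∈ degSet G s, ∀ v, s ≤ b v + d v := by
  classical
  rw [compIdeal_pow, mem_ideal_span_monomial_image, support_monomial, if_neg one_ne_zero]
  simp only [Finset.mem_singleton, forall_eq]
  constructor
  · rintro ⟨u, ⟨d, hd, hu⟩, hle⟩
    refine ⟨d, hd, fun v => ?_⟩
    have := hu v
    have := hle v
    omega
  · rintro ⟨d, hd, h⟩
    have hds : ∀ v, d v ≤ s := by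
      obtain ⟨M, hMc, -, hM⟩ := hd
      intro v
      rw [hM, ← hMc]; exact dg_le_card M v
    refine ⟨Finsupp.equivFunOnFinite.symm fun v => s - d v, ⟨d, hd, fun v => ?_⟩, fun v => ?_⟩
    · have := hds v
      simp only [Finsupp.equivFunOnFinite_symm_apply_apply]
      omega
    · have := h v
      simp only [Finsupp.equivFunOnFinite_symm_apply_apply]
      omega

lemma mem_pow_iff_faces (G : SimpleGraph (Fin n)) (s : ℕ) (a : Fin n →₀ ℕ) (F : Finset (Fin n)) :
    (expF F ≤ a ∧ (monomial (a - expF F) (1 : K) : S K n) ∈ compIdeal K n G ^ s) ↔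
      F ∈ faces (degSet G s) s a := by
  rw [monomial_mem_pow]
  constructor
  · rintro ⟨hle, d, hd, h⟩
    refine ⟨d, hd, fun v => ?_⟩
    have h1 := h v
    have h2 := hle v
    rw [Finsupp.tsub_apply] at h1
    rw [expF_apply] at h1 h2
    omega
  · rintro ⟨d, hd, h⟩
    have hds : ∀ v, d v ≤ s := by
      obtain ⟨M, hMc, -, hM⟩ := hd
      intro v
      rw [hM, ← hMc]; exact dg_le_card M v
    refine ⟨fun v => ?_, d, hd, fun v => ?_⟩
    · have := h v
      have := hds v
      rw [expF_apply]
      omega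
    · have := h v
      have := hds v
      rw [Finsupp.tsub_apply, expF_apply]
      omega

end Powers

/-! ### Koszul homology and multiplication by a generator -/

section Homology

variable {K : Type} [Field K] {n : ℕ}

/-- The inclusion of the Koszul strand of `I` in multidegree `a` into the chains of the full
simplex. -/
noncomputable def toSimplex (I : Ideal (S K n)) (a : Fin n →₀ ℕ) (i : ℕ) :
    (KB I a i →₀ K) →ₗ[K] (Finset (Fin n) →₀ K) :=
  Finsupp.lmapDomain K K Subtype.val

lemma toSimplex_injective (I : Ideal (S K n)) (a : Fin n →₀ ℕ) (i : ℕ) :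
    Function.Injective (toSimplex I a i) :=
  Finsupp.mapDomain_injective Subtype.val_injective

lemma toSimplex_kd (I : Ideal (S K n)) (a : Fin n →₀ ℕ) (i : ℕ) (z : KB I a (i + 1) →₀ K) :
    toSimplex I a i (kd I a i z) = bd K (toSimplex I a (i + 1) z) := by
  have h : toSimplex I a i ∘ₗ kd I a i = bd K ∘ₗ toSimplex I a (i + 1) := by
    refine Finsupp.lhom_ext' fun F => LinearMap.ext_ring ?_
    simp only [LinearMap.coe_comp, Function.comp_apply, Finsupp.lsingle_apply]
    have e : toSimplex I a (i + 1) (Finsupp.single F 1) = Finsupp.single F.1 1 := by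
      simp [toSimplex]
    rw [e, bd_single, ← Finset.sum_attach]
    simp [kd, toSimplex, sg]
  exact LinearMap.congr_fun h z

lemma kdOut_eq_zero_iff (I : Ideal (S K n)) (a : Fin n →₀ ℕ) (i : ℕ) (z : KB I a i →₀ K) :
    kdOut I a i z = 0 ↔ bd K (toSimplex I a i z) = 0 := by
  cases i with
  | zero =>
    refine iff_of_true (by simp [kdOut]) ?_
    have h : bd K ∘ₗ toSimplex I a 0 = 0 := by
      refine Finsupp.lhom_ext' fun F => LinearMap.ext_ring ?_
      have hF : F.1 = ∅ := Finset.card_eq_zero.1 F.2.1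
      simp [toSimplex, bd_single, hF]
    exact LinearMap.congr_fun h z
  | succ i =>
    rw [← toSimplex_kd, map_eq_zero_iff _ (toSimplex_injective I a i)]
    rfl

/-- The chains supported on the faces of cardinality `i` of the upper Koszul complex `Δ` are exactly
those coming from the Koszul strand. -/
lemma mem_range_toSimplex (I : Ideal (S K n)) (a : Fin n →₀ ℕ) (i : ℕ)
    {w : Finset (Fin n) →₀ K} {Δ : Set (Finset (Fin n))}
    (hΔ : ∀ F, (expF F ≤ a ∧ (monomial (a - expF F) (1 : K) : S K n) ∈ I) ↔ F ∈ Δ) :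
    w ∈ Finsupp.supported K K (Δ ∩ {F | F.card = i}) ↔ ∃ z, toSimplex I a i z = w := by
  constructor
  · intro hw
    rw [Finsupp.supported_eq_span_single] at hw
    refine LinearMap.mem_range.1 (Submodule.span_le.2 ?_ hw)
    rintro _ ⟨F, hF, rfl⟩
    exact ⟨Finsupp.single ⟨F, hF.2, (hΔ F).2 hF.1⟩ 1, by simp [toSimplex]⟩
  · rintro ⟨z, rfl⟩
    induction z using Finsupp.induction_linear with
    | zero => simp
    | add f g hf hg => rw [map_add]; exact Submodule.add_mem _ hf hg
    | single F b =>
      rw [toSimplex, Finsupp.lmapDomain_apply, Finsupp.mapDomain_single]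
      exact Finsupp.single_mem_supported K _ ⟨(hΔ F.1).1 F.2.2, F.2.1⟩

lemma subsingleton_Hmod (I : Ideal (S K n)) (a : Fin n →₀ ℕ) (i : ℕ) {Δ : Set (Finset (Fin n))}
    (hΔ : ∀ F, (expF F ≤ a ∧ (monomial (a - expF F) (1 : K) : S K n) ∈ I) ↔ F ∈ Δ)
    (h : Acyc K Δ i) : Subsingleton (Hmod I a i) := by
  rw [Submodule.subsingleton_iff_eq_bot, eq_bot_iff, Submodule.map_le_iff_le_comap]
  intro z hz
  rw [LinearMap.mem_ker, kdOut_eq_zero_iff] at hz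
  obtain ⟨w, hw, e⟩ := h _ ((mem_range_toSimplex I a i hΔ).2 ⟨z, rfl⟩) hz
  obtain ⟨w', rfl⟩ := (mem_range_toSimplex I a (i + 1) hΔ).1 hw
  rw [Submodule.mem_comap, Submodule.mem_bot, Submodule.mkQ_apply, Submodule.Quotient.mk_eq_zero]
  exact ⟨w', toSimplex_injective I a i (by rw [toSimplex_kd, e])⟩

/-- The powers of `I_c(G)` have linear resolutions: the `i`-th homology lives in total degree
`i + (n - 2) s`, written here without subtraction. -/
lemma degree_of_nontrivial (G : SimpleGraph (Fin n)) (hconn : G.Connected) {s i : ℕ}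
    {a : Fin n →₀ ℕ} (h : Nontrivial (Hmod (compIdeal K n G ^ s) a i)) :
    ∑ v, a v + 2 * s = i + n * s := by
  by_contra hi
  have := subsingleton_Hmod _ a i (mem_pow_iff_faces (K := K) G s a)
    (acyc_faces_degSet G hconn s i a hi)
  exact not_subsingleton _ this

/-- If `J` has no chains one step up, as on the linear strand, its homology is the space of cycles,
and multiplication by `x^f` embeds the cycles of `I` into those of `J`. -/
lemma rank_Hmod_le {I J : Ideal (S K n)} {a f : Fin n →₀ ℕ} {i : ℕ}
    (hIJ : ∀ F, expF F ≤ a → (monomial (a - expF F) (1 : K) : S K n) ∈ I →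
      (monomial (a + f - expF F) (1 : K) : S K n) ∈ J)
    (hJ : IsEmpty (KB J (a + f) (i + 1))) :
    Module.rank K (Hmod I a i) ≤ Module.rank K (Hmod J (a + f) i) := by
  let φ : KB I a i → KB J (a + f) i := fun F =>
    ⟨F.1, F.2.1, F.2.2.1.trans le_self_add, hIJ F.1 F.2.2.1 F.2.2.2⟩
  have hφ : ∀ z, toSimplex J (a + f) i (Finsupp.lmapDomain K K φ z) = toSimplex I a i z := by
    intro z
    simp only [toSimplex, Finsupp.lmapDomain_apply, ← Finsupp.mapDomain_comp]
    rfl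
  have hker : ∀ z ∈ LinearMap.ker (kdOut I a i),
      Finsupp.lmapDomain K K φ z ∈ LinearMap.ker (kdOut J (a + f) i) := by
    intro z hz
    rw [LinearMap.mem_ker, kdOut_eq_zero_iff] at hz ⊢
    rwa [hφ]
  have hinj : Function.Injective ((Finsupp.lmapDomain K K φ).restrict hker) := by
    intro z w h
    apply Subtype.ext
    apply toSimplex_injective I a i
    rw [← hφ, ← hφ]
    exact congrArg _ (congrArg Subtype.val h)
  have hbot : LinearMap.range (kd J (a + f) i) = ⊥ := by
    rw [LinearMap.range_eq_bot]
    ext F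
    exact hJ.elim F
  have hmk : Function.Injective (LinearMap.range (kd J (a + f) i)).mkQ := by
    rw [← LinearMap.ker_eq_bot, Submodule.ker_mkQ, hbot]
  calc Module.rank K (Hmod I a i) ≤ Module.rank K (LinearMap.ker (kdOut I a i)) :=
        rank_map_le _ _
    _ ≤ Module.rank K (LinearMap.ker (kdOut J (a + f) i)) :=
        LinearMap.rank_le_of_injective _ hinj
    _ = Module.rank K (Hmod J (a + f) i) :=
        (Submodule.equivMapOfInjective _ hmk _).rank_eq

lemma sum_le_sum_of_shift (f : Fin n →₀ ℕ) (p q : (Fin n →₀ ℕ) → Cardinal.{0})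
    (h : ∀ a, p a ≤ q (a + f)) : Cardinal.sum p ≤ Cardinal.sum q := by
  refine (Cardinal.sum_le_sum p (fun a => q (a + f)) h).trans ?_
  refine Cardinal.mk_le_of_injective
    (f := fun x : (Σ a, (q (a + f)).out) => (⟨x.1 + f, x.2⟩ : Σ a, (q a).out)) ?_
  rintro ⟨a, x⟩ ⟨b, y⟩ hxy
  have hab : a = b := add_right_cancel (congrArg Sigma.fst hxy)
  subst hab
  simpa using hxy

lemma rank_pow_le (G : SimpleGraph (Fin n)) (hconn : G.Connected) {x y : Fin n} (hxy : G.Adj x y)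
    (s i : ℕ) (a : Fin n →₀ ℕ) :
    Module.rank K (Hmod (compIdeal K n G ^ s) a i) ≤
      Module.rank K (Hmod (compIdeal K n G ^ (s + 1))
        (a + (aexp n - Finsupp.single x 1 - Finsupp.single y 1)) i) := by
  set f : Fin n →₀ ℕ := aexp n - Finsupp.single x 1 - Finsupp.single y 1 with hf
  rcases subsingleton_or_nontrivial (Hmod (compIdeal K n G ^ s) a i) with h | h
  · rw [rank_subsingleton']
    exact bot_le
  have hdeg := degree_of_nontrivial G hconn h
  refine rank_Hmod_le ?_ ?_
  · intro F hF hmem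
    have e : a + f - expF F = (a - expF F) + f := tsub_add_eq_add_tsub hF |>.symm
    rw [e, pow_succ, show (monomial (a - expF F + f) (1 : K) : S K n) =
      monomial (a - expF F) 1 * monomial f 1 by rw [monomial_mul, one_mul]]
    exact Ideal.mul_mem_mul hmem (Ideal.subset_span ⟨x, y, hxy, rfl⟩)
  · refine ⟨fun F => ?_⟩
    obtain ⟨d, hd, hv⟩ := (mem_pow_iff_faces G (s + 1) (a + f) F.1).1 F.2.2
    have h1 := Finset.sum_le_sum fun v (_ : v ∈ Finset.univ) => hv v
    have h2 : ∑ v, (f v + dg {s(x, y)} v) = n := by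
      rw [Finset.sum_congr rfl fun v _ => gen_apply hxy.ne v]; simp
    rw [Finset.sum_add_distrib, sum_dg G _ (by simpa using hxy)] at h2
    simp only [Finset.sum_add_distrib, Finsupp.add_apply, sum_degSet hd] at h1
    have h3 : ∑ v : Fin n, (if v ∈ F.1 then 1 else 0) = i + 1 := by
      simpa using F.2.1
    rw [h3] at h1
    simp only [Finset.sum_const, Finset.card_univ, Fintype.card_fin, smul_eq_mul,
      Multiset.card_singleton] at h1 h2
    nlinarith

end Homology

/-- For a connected graph `G` on `[n]`, the total Betti
numbers satisfy `β_i(I_c(G)^s) ≤ β_i(I_c(G)^{s+1})` for all `i ≥ 0`, `s ≥ 1`;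
in particular `s ↦ pd(I_c(G)^s)` is non-decreasing. -/
theorem betti_compIdeal_pow_mono
    (K : Type) [Field K] (n : ℕ) (G : SimpleGraph (Fin n)) (hconn : G.Connected) :
    ∀ s : ℕ, 1 ≤ s →
      (∀ i : ℕ,
        (Cardinal.sum fun a : Fin n →₀ ℕ =>
          Module.rank K (Hmod (compIdeal K n G ^ s) a i)) ≤
        (Cardinal.sum fun a : Fin n →₀ ℕ =>
          Module.rank K (Hmod (compIdeal K n G ^ (s + 1)) a i))) ∧
      pdim (compIdeal K n G ^ s) ≤ pdim (compIdeal K n G ^ (s + 1)) := by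
  intro s hs
  by_cases hE : ∃ x y, G.Adj x y
  · obtain ⟨x, y, hxy⟩ := hE
    refine ⟨fun i => sum_le_sum_of_shift _ _ _ fun a => rank_pow_le G hconn hxy s i a, ?_⟩
    refine csSup_le_csSup' ⟨n, ?_⟩ ?_
    · rintro i ⟨a, h⟩
      by_contra hi
      have hemp : IsEmpty (KB (compIdeal K n G ^ (s + 1)) a i) := by
        refine ⟨fun F => hi ?_⟩
        rw [← F.2.1]
        simpa using Finset.card_le_univ F.1
      exact not_subsingleton (Hmod (compIdeal K n G ^ (s + 1)) a i) inferInstance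
    · rintro i ⟨a, h⟩
      exact ⟨_, rank_pos_iff_nontrivial.1
        ((rank_pos_iff_nontrivial.2 h).trans_le (rank_pow_le G hconn hxy s i a))⟩
  -- without edges (`n = 1`) the ideal is zero, and so are its positive powers
  · have hI : compIdeal K n G = ⊥ := by
      rw [compIdeal, Ideal.span_eq_bot]
      rintro p ⟨x, y, hxy, -⟩
      exact absurd ⟨x, y, hxy⟩ hE
    rw [hI, ← Ideal.zero_eq_bot, zero_pow (by omega), zero_pow (by omega)]
    exact ⟨fun _ => le_rfl, le_rfl⟩

end Paper
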